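/- For every ε > 0 there exists n₀ such that for all n ≥ n₀, every prime power q and every integer k ≥ 2 satisfying either (q = 2 and n ≥ 2k+2) or (q ≥ 3 and n ≥ 2k+1): the number of non-trivial intersecting families of k-dimensional subspaces of 𝔽_q^n is at most ε·[n choose 1]_q·2^{[n−1 choose k−1]_q}, and the total number of intersecting families of k-dimensional subspaces of 𝔽_q^n lies between (1−ε)·[n choose 1]_q·2^{[n−1 choose k−1]_q} and (1+ε)·[n choose 1]_q·2^{[n−1 choose k−1]_q}. -/

import Mathlib

/-!
Call a family non-trivial if its members have zero intersection. Among the members of a maximal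
intersecting family, a minimal subfamily with the same transversals is, by Bollobás' theorem for
subspaces, of size at most `n.choose k`, and it determines the whole family. So there are few
maximal families. Branching over the points of successive members, as Hilton and Milner do for
sets, shows that a non-trivial one has at most `3/4 * [n - 1, k - 1]` members. Hence non-trivial
families, being subsets of these, are negligible against the `2 ^ [n - 1, k - 1]` subfamilies of a
single star. The trivial families are the subfamilies of the `[n, 1]` stars, and two distinct stars
share only `2 ^ [n - 2, k - 2]` of them, so that Bonferroni's inequalities give their number.
-/

/-- The Gaussian binomial coefficient `[n choose k]_q`, via its product formula. -/
noncomputable def gaussBinom (q n k : ℕ) : ℝ :=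
  ∏ i ∈ Finset.range k, (((q : ℝ) ^ (n - i) - 1) / ((q : ℝ) ^ (k - i) - 1))

/-- A family of subspaces is intersecting if any two of its members meet in a
subspace of dimension at least 1. -/
def IsIntersectingFam {K : Type*} [Field K] {n : ℕ}
    (𝓕 : Finset (Submodule K (Fin n → K))) : Prop :=
  ∀ U ∈ 𝓕, ∀ V ∈ 𝓕, 1 ≤ Module.finrank K ↥(U ⊓ V)

/-- An intersecting family of subspaces is trivial if some fixed 1-dimensional
subspace is contained in every member. -/
def IsTrivialFam {K : Type*} [Field K] {n : ℕ}
    (𝓕 : Finset (Submodule K (Fin n → K))) : Prop :=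
  ∃ L : Submodule K (Fin n → K), Module.finrank K L = 1 ∧ ∀ U ∈ 𝓕, L ≤ U

open Module Submodule Finset

section GaussBinom

variable {q : ℕ}

theorem gaussBinom_succ_succ (q n k : ℕ) :
    gaussBinom q (n + 1) (k + 1) =
      gaussBinom q n k * (((q : ℝ) ^ (n + 1) - 1) / ((q : ℝ) ^ (k + 1) - 1)) := by
  simp only [gaussBinom, Finset.prod_range_succ', Nat.add_sub_add_right, Nat.sub_zero]

@[simp]
theorem gaussBinom_zero_right (q n : ℕ) : gaussBinom q n 0 = 1 := by
  simp [gaussBinom]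

theorem gaussBinom_one_right (q n : ℕ) :
    gaussBinom q n 1 = ((q : ℝ) ^ n - 1) / ((q : ℝ) - 1) := by
  simp [gaussBinom]

theorem pow_mul_sub_le_gaussBinom (hq : 2 ≤ q) {n k : ℕ} (hk : k ≤ n) :
    (q : ℝ) ^ (k * (n - k)) ≤ gaussBinom q n k := by
  have hq1 : (1 : ℝ) < q := mod_cast hq
  have factor_le : ∀ i ∈ Finset.range k,
      (q : ℝ) ^ (n - k) ≤ ((q : ℝ) ^ (n - i) - 1) / ((q : ℝ) ^ (k - i) - 1) := by
    intro i hi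
    have hik : i < k := Finset.mem_range.1 hi
    rw [le_div_iff₀ (sub_pos.2 (one_lt_pow₀ hq1 (by omega))), mul_sub, ← pow_add, mul_one,
      show n - k + (k - i) = n - i by omega]
    linarith [one_le_pow₀ hq1.le (n := n - k)]
  calc (q : ℝ) ^ (k * (n - k)) = ∏ _i ∈ Finset.range k, (q : ℝ) ^ (n - k) := by
        rw [Finset.prod_const, Finset.card_range, mul_comm, pow_mul]
    _ ≤ gaussBinom q n k := Finset.prod_le_prod (fun _ _ ↦ by positivity) factor_le

theorem one_le_gaussBinom (hq : 2 ≤ q) {n k : ℕ} (hk : k ≤ n) : 1 ≤ gaussBinom q n k :=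
  (one_le_pow₀ (mod_cast one_le_two.trans hq)).trans (pow_mul_sub_le_gaussBinom hq hk)

theorem gaussBinom_pos (hq : 2 ≤ q) {n k : ℕ} (hk : k ≤ n) : 0 < gaussBinom q n k :=
  one_pos.trans_le (one_le_gaussBinom hq hk)

theorem gaussBinom_one_right_nonneg (hq : 2 ≤ q) (n : ℕ) : 0 ≤ gaussBinom q n 1 := by
  have hq1 : (1 : ℝ) < q := mod_cast hq
  rw [gaussBinom_one_right]
  exact div_nonneg (sub_nonneg.2 (one_le_pow₀ hq1.le)) (sub_pos.2 hq1).le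

theorem gaussBinom_one_right_le_pow (hq : 2 ≤ q) (n : ℕ) : gaussBinom q n 1 ≤ (q : ℝ) ^ n := by
  have hq2 : (2 : ℝ) ≤ q := mod_cast hq
  rw [gaussBinom_one_right, div_le_iff₀ (by linarith)]
  nlinarith [one_le_pow₀ (one_le_two.trans hq2) (n := n)]

theorem gaussBinom_succ_one_le_pow (hq : 2 ≤ q) (n : ℕ) :
    gaussBinom q (n + 1) 1 ≤ ((q : ℝ) + 1) ^ n := by
  have hq1 : (1 : ℝ) < q := mod_cast hq
  rw [gaussBinom_one_right, div_le_iff₀ (sub_pos.2 hq1)]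
  induction n with
  | zero => simp
  | succ n ih =>
    have h : (q : ℝ) ≤ q ^ (n + 1) := le_self_pow₀ hq1.le n.succ_ne_zero
    calc (q : ℝ) ^ (n + 1 + 1) - 1 = q * (q ^ (n + 1) - 1) + (q - 1) := by ring
      _ ≤ (q + 1) * (q ^ (n + 1) - 1) := by linarith
      _ ≤ (q + 1) * ((q + 1) ^ n * (q - 1)) := by gcongr
      _ = (q + 1) ^ (n + 1) * (q - 1) := by ring

theorem gaussBinom_succ_succ_mul (hq : 2 ≤ q) (n k : ℕ) :
    gaussBinom q (n + 1) (k + 1) * gaussBinom q (k + 1) 1 =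
      gaussBinom q (n + 1) 1 * gaussBinom q n k := by
  have hq1 : (1 : ℝ) < q := mod_cast hq
  have hk : (q : ℝ) ^ (k + 1) - 1 ≠ 0 := (sub_pos.2 (one_lt_pow₀ hq1 k.succ_ne_zero)).ne'
  rw [gaussBinom_succ_succ, gaussBinom_one_right, gaussBinom_one_right]
  field_simp

theorem pow_mul_gaussBinom_one_mul_le (hq : 2 ≤ q) {e k a b : ℕ} (h : e + k + a ≤ b) :
    (q : ℝ) ^ e * (q - 1) * (gaussBinom q k 1 * gaussBinom q a 1) ≤ gaussBinom q b 1 := by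
  have hq1 : (1 : ℝ) < q := mod_cast hq
  have hq0 : (0 : ℝ) < q - 1 := sub_pos.2 hq1
  have pow_le : (q : ℝ) ^ e * (q ^ k - 1) * (q ^ a - 1) ≤ q ^ b - 1 := by
    have ha : (0 : ℝ) ≤ q ^ a - 1 := sub_nonneg.2 (one_le_pow₀ hq1.le)
    calc (q : ℝ) ^ e * (q ^ k - 1) * (q ^ a - 1) ≤ q ^ e * q ^ k * (q ^ a - 1) := by
          gcongr; linarith
      _ = q ^ (e + k + a) - q ^ (e + k) := by ring
      _ ≤ q ^ b - 1 := sub_le_sub (pow_le_pow_right₀ hq1.le h) (one_le_pow₀ hq1.le)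
  rw [gaussBinom_one_right, gaussBinom_one_right, gaussBinom_one_right, le_div_iff₀ hq0]
  calc _ = (q : ℝ) ^ e * (q ^ k - 1) * (q ^ a - 1) := by field_simp
    _ ≤ _ := pow_le

theorem pow_mul_gaussBinom_le_succ_succ (hq : 2 ≤ q) {e k a b : ℕ} (h : e + k + a ≤ b) :
    (q : ℝ) ^ e * (q - 1) * (gaussBinom q k 1 * gaussBinom q b a) ≤
      gaussBinom q (b + 1) (a + 1) := by
  have ha : 0 < gaussBinom q (a + 1) 1 := gaussBinom_pos hq (by omega)
  have hb : 0 < gaussBinom q b a := gaussBinom_pos hq (by omega)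
  refine le_of_mul_le_mul_right ?_ ha
  rw [gaussBinom_succ_succ_mul hq]
  calc (q : ℝ) ^ e * (q - 1) * (gaussBinom q k 1 * gaussBinom q b a) * gaussBinom q (a + 1) 1
      = (q : ℝ) ^ e * (q - 1) * (gaussBinom q k 1 * gaussBinom q (a + 1) 1) * gaussBinom q b a := by
        ring
    _ ≤ gaussBinom q (b + 1) 1 * gaussBinom q b a := by
        gcongr; exact pow_mul_gaussBinom_one_mul_le hq (by omega)

theorem pow_mul_gaussBinom_le_add_add (hq : 2 ≤ q) {e k a b : ℕ} (h : e + k + a ≤ b) (t : ℕ) :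
    ((q : ℝ) ^ e * (q - 1)) ^ t * (gaussBinom q k 1 ^ t * gaussBinom q b a) ≤
      gaussBinom q (b + t) (a + t) := by
  have hq1 : (0 : ℝ) < q - 1 := sub_pos.2 (mod_cast hq)
  induction t with
  | zero => simp
  | succ t ih =>
    have hk : 0 ≤ gaussBinom q k 1 := gaussBinom_one_right_nonneg hq k
    calc ((q : ℝ) ^ e * (q - 1)) ^ (t + 1) * (gaussBinom q k 1 ^ (t + 1) * gaussBinom q b a)
        = (q : ℝ) ^ e * (q - 1) * (gaussBinom q k 1 *
            (((q : ℝ) ^ e * (q - 1)) ^ t * (gaussBinom q k 1 ^ t * gaussBinom q b a))) := by ring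
      _ ≤ (q : ℝ) ^ e * (q - 1) * (gaussBinom q k 1 * gaussBinom q (b + t) (a + t)) := by gcongr
      _ ≤ gaussBinom q (b + (t + 1)) (a + (t + 1)) :=
          pow_mul_gaussBinom_le_succ_succ hq (by omega)

theorem gaussBinom_branching_le (hq : 2 ≤ q) {e k a b t : ℕ} {c : ℝ} (h : e + k + a ≤ b)
    (hc : (q : ℝ) + 1 ≤ c * (q ^ e * (q - 1))) (hc1 : c ≤ 1) (ht : 1 ≤ t) :
    gaussBinom q (t + 1) 1 * (gaussBinom q k 1 ^ t * gaussBinom q b a) ≤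
      c * gaussBinom q (b + t) (a + t) := by
  have hr : (0 : ℝ) < q ^ e * (q - 1) :=
    mul_pos (pow_pos (by positivity) e) (sub_pos.2 (mod_cast hq))
  have hc0 : 0 ≤ c := nonneg_of_mul_nonneg_left ((by positivity : (0 : ℝ) ≤ q + 1).trans hc) hr
  have hnonneg : 0 ≤ gaussBinom q k 1 ^ t * gaussBinom q b a :=
    mul_nonneg (pow_nonneg (gaussBinom_one_right_nonneg hq k) t) (gaussBinom_pos hq (by omega)).le
  calc gaussBinom q (t + 1) 1 * (gaussBinom q k 1 ^ t * gaussBinom q b a)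
      ≤ (c * (q ^ e * (q - 1))) ^ t * (gaussBinom q k 1 ^ t * gaussBinom q b a) := by
        gcongr
        exact (gaussBinom_succ_one_le_pow hq t).trans (by gcongr)
    _ = c ^ t * ((q ^ e * (q - 1)) ^ t * (gaussBinom q k 1 ^ t * gaussBinom q b a)) := by
        rw [mul_pow]; ring
    _ ≤ c * gaussBinom q (b + t) (a + t) := by
        have := (gaussBinom_pos hq (by omega : a + t ≤ b + t)).le
        gcongr
        · exact pow_le_of_le_one hc0 hc1 (by omega)
        · exact pow_mul_gaussBinom_le_add_add hq h t

theorem gaussBinom_le_mul_succ_succ (hq : 2 ≤ q) {e a b : ℕ} {c : ℝ} (h : e + 1 + a ≤ b)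
    (hc : (q : ℝ) + 1 ≤ c * (q ^ e * (q - 1))) (hc1 : c ≤ 1) :
    gaussBinom q b a ≤ c * gaussBinom q (b + 1) (a + 1) := by
  refine le_trans ?_ (gaussBinom_branching_le hq h hc hc1 le_rfl)
  rw [pow_one, ← mul_assoc]
  exact le_mul_of_one_le_left (gaussBinom_pos hq (by omega)).le
    (one_le_mul_of_one_le_of_one_le (one_le_gaussBinom hq (by omega)) (one_le_gaussBinom hq le_rfl))

end GaussBinom

section Counting

variable {K V : Type*} [Field K] [AddCommGroup V] [Module K V]

theorem finrank_comap_mkQ [FiniteDimensional K V] (L : Submodule K V) (W : Submodule K (V ⧸ L)) :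
    finrank K (W.comap L.mkQ) = finrank K W + finrank K L := by
  have h := (L.mkQ.domRestrict (W.comap L.mkQ)).finrank_range_add_finrank_ker
  rw [LinearMap.range_domRestrict, map_comap_eq_of_surjective L.mkQ_surjective,
    LinearMap.ker_domRestrict, ker_mkQ] at h
  rw [← h]
  congr 1
  exact (submoduleOfEquivOfLe (le_comap_mkQ L W)).finrank_eq

variable [Finite V]

/-- The set of points of a subspace `T`: the `1`-dimensional subspaces of `T`, encoded as the atoms
of the subspace lattice. -/
noncomputable def points (T : Submodule K V) : Finset (Submodule K V) :=
  {p : Submodule K V | IsAtom p ∧ p ≤ T}.toFinite.toFinset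

/-- The `k`-star of a subspace `L`: the `k`-dimensional subspaces containing `L`. -/
noncomputable def kStar (k : ℕ) (L : Submodule K V) : Finset (Submodule K V) :=
  {U : Submodule K V | finrank K U = k ∧ L ≤ U}.toFinite.toFinset

@[simp]
theorem mem_points {T p : Submodule K V} : p ∈ points T ↔ IsAtom p ∧ p ≤ T := by
  simp [points]

@[simp]
theorem mem_kStar {k : ℕ} {L U : Submodule K V} : U ∈ kStar k L ↔ finrank K U = k ∧ L ≤ U := by
  simp [kStar]

instance (L : Submodule K V) : Finite (V ⧸ L) :=
  Finite.of_surjective _ L.mkQ_surjective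

theorem card_kStar_add_finrank (k : ℕ) (L : Submodule K V) :
    #(kStar (k + finrank K L) L) = #(kStar k (⊥ : Submodule K (V ⧸ L))) := by
  refine (card_nbij' (comap L.mkQ) (map L.mkQ) ?_ ?_ ?_ ?_).symm
  · intro W hW
    simp_all [finrank_comap_mkQ, le_comap_mkQ]
  · intro U hU
    obtain ⟨hUk, hLU⟩ := mem_kStar.1 hU
    have h := finrank_comap_mkQ L (U.map L.mkQ)
    rw [comap_map_mkQ, sup_eq_right.2 hLU] at h
    simp only [SetLike.mem_coe, mem_kStar, bot_le, and_true]
    omega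
  · intro W _
    exact map_comap_eq_of_surjective L.mkQ_surjective W
  · intro U hU
    simp_all [comap_map_mkQ]

theorem sum_card_points_kStar_bot (k : ℕ) :
    ∑ U ∈ kStar k (⊥ : Submodule K V), #(points U) =
      ∑ p ∈ points (⊤ : Submodule K V), #(kStar k p) := by
  classical
  have h := sum_card_bipartiteAbove_eq_sum_card_bipartiteBelow
    (s := points (⊤ : Submodule K V)) (t := kStar k ⊥) (· ≤ ·)
  convert h.symm using 3 <;> ext <;> simp [bipartiteAbove, bipartiteBelow, and_comm]

theorem card_points_eq_natCard_projectivization (T : Submodule K V) :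
    #(points T) = Nat.card (Projectivization K T) := by
  have coe_points : (points T : Set (Submodule K V)) =
      map T.subtype '' {H : Submodule K T | finrank K H = 1} := by
    ext p
    simp only [mem_coe, mem_points, isAtom_iff_finrank_eq_one, Set.mem_image, Set.mem_ofPred_eq]
    constructor
    · rintro ⟨hp, hpT⟩
      exact ⟨p.submoduleOf T, by rwa [(submoduleOfEquivOfLe hpT).finrank_eq],
        (map_comap_subtype _ _).trans (inf_eq_right.2 hpT)⟩
    · rintro ⟨H, hH, rfl⟩
      exact ⟨by rwa [finrank_map_subtype_eq], map_subtype_le T H⟩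
  rw [← Set.ncard_coe_finset, coe_points,
    Set.ncard_image_of_injective _ (map_injective_of_injective T.subtype_injective),
    Nat.card_congr (Projectivization.equivSubmodule K T)]
  rfl

variable [Fintype K]

theorem card_points (T : Submodule K V) :
    #(points T) = gaussBinom (Fintype.card K) (finrank K T) 1 := by
  have hq : (Fintype.card K : ℝ) ≠ 1 := mod_cast Fintype.one_lt_card.ne'
  rw [card_points_eq_natCard_projectivization, Projectivization.card_of_finrank K T rfl,
    gaussBinom_one_right]
  simp [geom_sum_eq hq, Nat.card_eq_fintype_card]

theorem card_kStar_bot {k : ℕ} (hk : k ≤ finrank K V) :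
    #(kStar k (⊥ : Submodule K V)) = gaussBinom (Fintype.card K) (finrank K V) k := by
  have hq : 2 ≤ Fintype.card K := Fintype.one_lt_card
  induction k generalizing V with
  | zero =>
    have : kStar 0 (⊥ : Submodule K V) = {⊥} := by ext; simp
    simp [this]
  | succ k ih =>
    obtain ⟨n, hn⟩ : ∃ n, finrank K V = n + 1 := ⟨finrank K V - 1, by omega⟩
    have card_kStar_point : ∀ p ∈ points (⊤ : Submodule K V),
        (#(kStar (k + 1) p) : ℝ) = gaussBinom (Fintype.card K) n k := by
      intro p hp
      have hp1 : finrank K p = 1 := isAtom_iff_finrank_eq_one.1 (mem_points.1 hp).1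
      have hquot : finrank K (V ⧸ p) = n := by
        have := p.finrank_quotient_add_finrank; omega
      rw [← hp1, card_kStar_add_finrank, ih (by omega), hquot]
    have card_points_eq : ∀ U ∈ kStar (k + 1) (⊥ : Submodule K V),
        (#(points U) : ℝ) = gaussBinom (Fintype.card K) (k + 1) 1 := by
      intro U hU
      rw [card_points, (mem_kStar.1 hU).1]
    have h := congrArg (Nat.cast (R := ℝ)) (sum_card_points_kStar_bot (K := K) (V := V) (k + 1))
    push_cast at h
    rw [sum_congr rfl card_points_eq, sum_congr rfl card_kStar_point, sum_const, sum_const,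
      nsmul_eq_mul, nsmul_eq_mul, card_points, finrank_top, hn,
      ← gaussBinom_succ_succ_mul hq] at h
    rw [hn]
    exact mul_right_cancel₀ (gaussBinom_pos hq (by omega)).ne' h

theorem card_kStar {k : ℕ} (L : Submodule K V) (hL : finrank K L ≤ k) (hk : k ≤ finrank K V) :
    #(kStar k L) =
      gaussBinom (Fintype.card K) (finrank K V - finrank K L) (k - finrank K L) := by
  obtain ⟨j, rfl⟩ := Nat.exists_eq_add_of_le' hL
  have hquot := L.finrank_quotient_add_finrank
  rw [card_kStar_add_finrank, card_kStar_bot (by omega), ← hquot, Nat.add_sub_cancel,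
    Nat.add_sub_cancel]

theorem natCard_submodule_le :
    Nat.card (Submodule K V) ≤ Fintype.card K ^ (finrank K V * finrank K V) := by
  have range_surjective : Function.Surjective (LinearMap.range : (V →ₗ[K] V) → Submodule K V) := by
    intro U
    obtain ⟨W, hW⟩ := U.exists_isCompl
    exact ⟨U.projection W hW, range_projection hW⟩
  have : Finite (V →ₗ[K] V) := Finite.of_injective _ DFunLike.coe_injective
  calc Nat.card (Submodule K V) ≤ Nat.card (V →ₗ[K] V) :=
        Nat.card_le_card_of_surjective _ range_surjective
    _ = Fintype.card K ^ (finrank K V * finrank K V) := by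
        rw [Module.natCard_eq_pow_finrank (K := K), finrank_linearMap, Nat.card_eq_fintype_card]

end Counting

section HiltonMilner

variable {K V : Type*} [Field K] [AddCommGroup V] [Module K V]

/-- The transversals of a set of subspaces: the subspaces meeting every member nontrivially. -/
def transversals (S : Set (Submodule K V)) : Set (Submodule K V) :=
  {U | ∀ W ∈ S, ¬Disjoint W U}

theorem finrank_sup_of_disjoint [FiniteDimensional K V] {U W : Submodule K V} (h : Disjoint U W) :
    finrank K ↥(U ⊔ W) = finrank K U + finrank K W := by
  have := finrank_sup_add_finrank_inf_eq U W
  rwa [h.eq_bot, finrank_bot, add_zero] at this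

theorem two_le_finrank_of_mem_transversals [FiniteDimensional K V]
    {F : Finset (Submodule K V)} (hne : F.Nonempty)
    (hF : sInf (F : Set (Submodule K V)) = ⊥) {T : Submodule K V}
    (hT : T ∈ transversals (F : Set (Submodule K V))) : 2 ≤ finrank K T := by
  obtain ⟨W, hW⟩ := hne
  have hT0 : T ≠ ⊥ := by
    rintro rfl
    exact hT W hW disjoint_bot_right
  have hT1 : ¬IsAtom T := fun h ↦ by
    have hle : T ≤ sInf (F : Set (Submodule K V)) :=
      le_sInf fun U hU ↦ h.not_disjoint_iff_le.1 fun hTU ↦ hT U hU hTU.symm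
    exact hT0 (le_bot_iff.1 (hF ▸ hle))
  have := mt finrank_eq_zero.1 hT0
  have := mt isAtom_iff_finrank_eq_one.2 hT1
  omega

variable [Finite V]

theorem points_nonempty {T : Submodule K V} (hT : T ≠ ⊥) : (points T).Nonempty := by
  obtain ⟨p, hp, hpT⟩ := (eq_bot_or_exists_atom_le T).resolve_left hT
  exact ⟨p, mem_points.2 ⟨hp, hpT⟩⟩

theorem exists_mem_points_card_le [DecidableLE (Submodule K V)] {G : Finset (Submodule K V)}
    {T : Submodule K V} (hT : T ≠ ⊥) (hG : ∀ W ∈ G, ¬Disjoint T W) :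
    ∃ p ∈ points T, #G ≤ #(points T) * #{W ∈ G | p ≤ W} := by
  classical
  obtain ⟨p, hp, hmax⟩ :=
    exists_max_image (points T) (fun p ↦ #{W ∈ G | p ≤ W}) (points_nonempty hT)
  have cover : G ⊆ (points T).biUnion fun p ↦ {W ∈ G | p ≤ W} := by
    intro W hW
    obtain ⟨r, hr⟩ := points_nonempty (mt disjoint_iff.2 (hG W hW))
    obtain ⟨hr_atom, hr_le⟩ := mem_points.1 hr
    obtain ⟨hrT, hrW⟩ := le_inf_iff.1 hr_le
    exact mem_biUnion.2 ⟨r, mem_points.2 ⟨hr_atom, hrT⟩, mem_filter.2 ⟨hW, hrW⟩⟩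
  exact ⟨p, hp, (card_le_card cover).trans (card_biUnion_le_card_mul _ _ _ hmax)⟩

variable [Fintype K] {F : Finset (Submodule K V)} {k t : ℕ}

theorem exists_card_filter_le_of_transversals [DecidableLE (Submodule K V)]
    (hF : (F : Set (Submodule K V)).Intersecting) (hFk : ∀ U ∈ F, finrank K U = k)
    (ht : ∀ T ∈ transversals (F : Set (Submodule K V)), t ≤ finrank K T)
    (S : Submodule K V) (j : ℕ) (hj : finrank K S + j ≤ t) :
    ∃ S' : Submodule K V, finrank K S' = finrank K S + j ∧
      (#{W ∈ F | S ≤ W} : ℝ) ≤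
        gaussBinom (Fintype.card K) k 1 ^ j * #{W ∈ F | S' ≤ W} := by
  have hk_nonneg := gaussBinom_one_right_nonneg (Fintype.one_lt_card (α := K)) k
  induction j with
  | zero => exact ⟨S, rfl, by simp⟩
  | succ j ih =>
    obtain ⟨S', hS', hSS'⟩ := ih (by omega)
    have not_transversal : S' ∉ transversals (F : Set (Submodule K V)) := fun h ↦ by
      have := ht S' h; omega
    obtain ⟨U, hU, hUS'⟩ : ∃ U ∈ F, Disjoint U S' := by
      simpa [transversals] using not_transversal
    obtain ⟨p, hp, hcard⟩ := exists_mem_points_card_le (G := {W ∈ F | S' ≤ W}) (hF.ne_bot hU)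
      fun W hW ↦ hF hU (mem_filter.1 hW).1
    obtain ⟨hp_atom, hpU⟩ := mem_points.1 hp
    refine ⟨S' ⊔ p, ?_, ?_⟩
    · rw [finrank_sup_of_disjoint (hUS'.symm.mono_right hpU), hS',
        isAtom_iff_finrank_eq_one.1 hp_atom, add_assoc]
    have hstep : (#{W ∈ F | S' ≤ W} : ℝ) ≤
        gaussBinom (Fintype.card K) k 1 * #{W ∈ F | S' ⊔ p ≤ W} := by
      simp only [filter_filter, ← sup_le_iff] at hcard
      rw [← hFk U hU, ← card_points]
      exact_mod_cast hcard
    calc (#{W ∈ F | S ≤ W} : ℝ)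
        ≤ gaussBinom (Fintype.card K) k 1 ^ j * #{W ∈ F | S' ≤ W} := hSS'
      _ ≤ gaussBinom (Fintype.card K) k 1 ^ j *
          (gaussBinom (Fintype.card K) k 1 * #{W ∈ F | S' ⊔ p ≤ W}) := by gcongr
      _ = gaussBinom (Fintype.card K) k 1 ^ (j + 1) * #{W ∈ F | S' ⊔ p ≤ W} := by ring

theorem exists_card_le_branching (hF : (F : Set (Submodule K V)).Intersecting)
    (hFk : ∀ U ∈ F, finrank K U = k) (hne : F.Nonempty)
    (hFbot : sInf (F : Set (Submodule K V)) = ⊥) :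
    ∃ t, 1 ≤ t ∧ t + 1 ≤ k ∧ (#F : ℝ) ≤ gaussBinom (Fintype.card K) (t + 1) 1 *
      (gaussBinom (Fintype.card K) k 1 ^ t *
        gaussBinom (Fintype.card K) (finrank K V - (t + 1)) (k - (t + 1))) := by
  classical
  have hq : 2 ≤ Fintype.card K := Fintype.one_lt_card
  obtain ⟨U, hU⟩ := hne
  have hU_mem : U ∈ transversals (F : Set (Submodule K V)) := fun W hW ↦ hF hW hU
  obtain ⟨T, hT, hTmin⟩ := Set.exists_min_image (transversals (F : Set (Submodule K V)))
    (finrank K ·) (Set.toFinite _) ⟨U, hU_mem⟩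
  have hT2 := two_le_finrank_of_mem_transversals ⟨U, hU⟩ hFbot hT
  obtain ⟨t, ht⟩ : ∃ t, finrank K T = t + 1 := ⟨finrank K T - 1, by omega⟩
  have htk : t + 1 ≤ k := by
    rw [← ht, ← hFk U hU]
    exact hTmin U hU_mem
  obtain ⟨p, hp, hFp⟩ := exists_mem_points_card_le (G := F)
    (one_le_finrank_iff.1 (by omega : 1 ≤ finrank K T)) fun W hW h ↦ hT W hW h.symm
  have hp1 : finrank K p = 1 := isAtom_iff_finrank_eq_one.1 (mem_points.1 hp).1
  obtain ⟨S, hS, hpS⟩ := exists_card_filter_le_of_transversals hF hFk hTmin p t (by omega)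
  have card_above : (#{W ∈ F | S ≤ W} : ℝ) ≤
      gaussBinom (Fintype.card K) (finrank K V - (t + 1)) (k - (t + 1)) := by
    have hSt : finrank K S = t + 1 := by omega
    have hkn : k ≤ finrank K V := hFk U hU ▸ U.finrank_le
    rw [← hSt, ← card_kStar S (by omega) hkn, Nat.cast_le]
    exact card_le_card fun W hW ↦
      mem_kStar.2 ⟨hFk W (mem_filter.1 hW).1, (mem_filter.1 hW).2⟩
  refine ⟨t, by omega, htk, ?_⟩
  have := gaussBinom_one_right_nonneg hq k
  have := gaussBinom_one_right_nonneg hq (t + 1)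
  calc (#F : ℝ) ≤ gaussBinom (Fintype.card K) (t + 1) 1 * #{W ∈ F | p ≤ W} := by
        rw [← ht, ← card_points]
        exact_mod_cast hFp
    _ ≤ gaussBinom (Fintype.card K) (t + 1) 1 *
        (gaussBinom (Fintype.card K) k 1 ^ t * #{W ∈ F | S ≤ W}) := by gcongr
    _ ≤ _ := by gcongr

theorem card_le_mul_gaussBinom_of_sInf_eq_bot (hF : (F : Set (Submodule K V)).Intersecting)
    (hFk : ∀ U ∈ F, finrank K U = k) (hne : F.Nonempty)
    (hFbot : sInf (F : Set (Submodule K V)) = ⊥) {e : ℕ} {c : ℝ}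
    (hn : 2 * k + e ≤ finrank K V)
    (hc : (Fintype.card K : ℝ) + 1 ≤ c * (Fintype.card K ^ e * (Fintype.card K - 1)))
    (hc1 : c ≤ 1) :
    (#F : ℝ) ≤ c * gaussBinom (Fintype.card K) (finrank K V - 1) (k - 1) := by
  obtain ⟨t, ht, htk, hcard⟩ := exists_card_le_branching hF hFk hne hFbot
  have hbranch := gaussBinom_branching_le Fintype.one_lt_card
    (by omega : e + k + (k - (t + 1)) ≤ finrank K V - (t + 1)) hc hc1 ht
  rw [show finrank K V - (t + 1) + t = finrank K V - 1 by omega,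
    show k - (t + 1) + t = k - 1 by omega] at hbranch
  exact hcard.trans hbranch

end HiltonMilner

section Bollobas

variable {K V : Type*} [Field K] [AddCommGroup V] [Module K V] [FiniteDimensional K V]

theorem exists_span_range_eq_of_disjoint {k : ℕ} {A B : Submodule K V} (hA : finrank K A = k)
    (hAB : Disjoint A B) :
    ∃ (v : Fin k → V) (φ : V →ₗ[K] Fin k → K),
      span K (Set.range v) = A ∧ B ≤ LinearMap.ker φ ∧ ∀ r, φ (v r) = Pi.single r 1 := by
  obtain ⟨C, hBC, hC⟩ := hAB.symm.exists_isCompl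
  let b := finBasisOfFinrankEq K A hA
  refine ⟨A.subtype ∘ b, b.equivFun.toLinearMap ∘ₗ A.projectionOnto C hC.symm, ?_, ?_, ?_⟩
  · rw [Set.range_comp, span_image, b.span_eq, map_subtype_top]
  · rwa [LinearEquiv.ker_comp, ker_projectionOnto]
  · intro r
    simp [projectionOnto_apply_left, Finsupp.single_eq_pi_single]

theorem card_le_choose_of_pairwise_not_disjoint {ι : Type*} [Fintype ι] {k : ℕ}
    {A B : ι → Submodule K V} (hA : ∀ i, finrank K (A i) = k) (hAB : ∀ i, Disjoint (A i) (B i))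
    (hpair : Pairwise fun i j ↦ ¬Disjoint (A i) (B j)) :
    Fintype.card ι ≤ (finrank K V).choose k := by
  choose v φ hv hφB hφv using fun i ↦ exists_span_range_eq_of_disjoint (hA i) (hAB i)
  let wedge i : ⋀[K]^k V := exteriorPower.ιMulti K k (v i)
  let coordDet i : Dual K (⋀[K]^k V) :=
    exteriorPower.alternatingMapLinearEquiv (Matrix.detRowAlternating.compLinearMap (φ i))
  have coordDet_wedge i j : coordDet j (wedge i) = Matrix.det (fun r ↦ φ j (v i r)) :=
    exteriorPower.alternatingMapLinearEquiv_apply_ιMulti _ _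
  have diag i : coordDet i (wedge i) = 1 := by
    have hone : (fun r ↦ φ i (v i r)) = (1 : Matrix (Fin k) (Fin k) K) := by
      ext r s
      simp [hφv, Matrix.one_apply, Pi.single_apply, eq_comm]
    rw [coordDet_wedge, hone, Matrix.det_one]
  have off_diag : Pairwise fun j i ↦ coordDet j (wedge i) = 0 := by
    intro j i hij
    have dependent : ¬LinearIndependent K (φ j ∘ v i) := fun h ↦
      hpair hij.symm ((hv i ▸ range_ker_disjoint h).mono_right (hφB j))
    rw [coordDet_wedge]
    exact Matrix.detRowAlternating.map_linearDependent _ dependent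
  have independent : LinearIndependent K wedge :=
    .of_pairwise_dual_eq_zero_one wedge coordDet off_diag diag
  rw [← exteriorPower.finrank_eq K k]
  exact independent.fintype_card_le_finrank

end Bollobas

section Containers

theorem ncard_le_card_mul_two_rpow {α ι : Type*} [Fintype ι] {𝒜 : Set (Finset α)}
    (T : ι → Finset α) {c : ℝ} (h𝒜 : ∀ F ∈ 𝒜, ∃ i, F ⊆ T i ∧ #(T i) ≤ c) :
    (𝒜.ncard : ℝ) ≤ Fintype.card ι * (2 : ℝ) ^ c := by
  classical
  let small : Finset ι := {i | (#(T i) : ℝ) ≤ c}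
  have cover : 𝒜 ⊆ small.biUnion fun i ↦ (T i).powerset := by
    intro F hF
    obtain ⟨i, hFi, hi⟩ := h𝒜 F hF
    exact mem_coe.2 <| mem_biUnion.2 ⟨i, by simpa [small] using hi, mem_powerset.2 hFi⟩
  have powerset_le : ∀ i ∈ small, (#(T i).powerset : ℝ) ≤ (2 : ℝ) ^ c := by
    intro i hi
    rw [card_powerset, Nat.cast_pow, Nat.cast_ofNat, ← Real.rpow_natCast]
    exact Real.rpow_le_rpow_of_exponent_le one_le_two (by simpa [small] using hi)
  calc (𝒜.ncard : ℝ) ≤ #(small.biUnion fun i ↦ (T i).powerset) := by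
        rw [← Set.ncard_coe_finset]
        exact_mod_cast Set.ncard_le_ncard cover
    _ ≤ ∑ i ∈ small, (#(T i).powerset : ℝ) := mod_cast card_biUnion_le
    _ ≤ #small * (2 : ℝ) ^ c := by
        simpa using sum_le_card_nsmul small _ _ powerset_le
    _ ≤ Fintype.card ι * (2 : ℝ) ^ c := by
        gcongr
        exact card_le_univ small

theorem exists_range_eq_of_card_le {α : Type*} {s : Finset α} {N : ℕ} (hs : s.Nonempty)
    (hN : #s ≤ N) : ∃ g : Fin N → α, Set.range g = s := by
  obtain ⟨f⟩ : Nonempty (s ↪ Fin N) := Function.Embedding.nonempty_of_card_le (by simpa using hN)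
  have : Nonempty s := hs.to_subtype
  refine ⟨Subtype.val ∘ Function.invFun f, ?_⟩
  rw [(Function.invFun_surjective f.injective).range_comp, Subtype.range_coe]

variable {K V : Type*} [Field K] [AddCommGroup V] [Module K V]

theorem exists_subset_transversals_eq [FiniteDimensional K V] {k : ℕ} {F : Finset (Submodule K V)}
    (hF : ∀ U ∈ F, finrank K U = k) :
    ∃ G ⊆ F, #G ≤ (finrank K V).choose k ∧
      transversals (G : Set (Submodule K V)) = transversals (F : Set (Submodule K V)) := by
  classical
  obtain ⟨G, hG⟩ := exists_minimal_of_wellFoundedLT (fun G : Finset (Submodule K V) ↦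
    G ⊆ F ∧ transversals (G : Set (Submodule K V)) = transversals (F : Set (Submodule K V)))
    ⟨F, subset_rfl, rfl⟩
  obtain ⟨hGF, hGtr⟩ := hG.prop
  have exists_witness : ∀ A : G, ∃ B : Submodule K V, Disjoint A.1 B ∧
      ∀ W ∈ G.erase A, ¬Disjoint W B := by
    intro A
    by_contra! hno
    refine hG.not_prop_of_lt (erase_ssubset A.2) ⟨(erase_subset _ _).trans hGF, hGtr ▸ ?_⟩
    refine Set.Subset.antisymm (fun U hU W hW hWU ↦ ?_)
      (fun U hU W hW ↦ hU W (erase_subset _ _ hW))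
    obtain rfl : W = A := by
      by_contra hWA
      exact hU W (mem_erase.2 ⟨hWA, hW⟩) hWU
    obtain ⟨W', hW', hdisj⟩ := hno U hWU
    exact hU W' hW' hdisj
  choose B hdisj hmeet using exists_witness
  refine ⟨G, hGF, ?_, hGtr⟩
  rw [← Fintype.card_coe G]
  exact card_le_choose_of_pairwise_not_disjoint (fun A ↦ hF A (hGF A.2)) hdisj
    fun A A' hne ↦ hmeet A' A (mem_erase.2 ⟨Subtype.coe_ne_coe.2 hne, A.2⟩)

/-- The intersecting families of `k`-dimensional subspaces of `V`. -/
def intersectingFamilies (K V : Type*) [Field K] [AddCommGroup V] [Module K V] (k : ℕ) :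
    Set (Finset (Submodule K V)) :=
  {F | (∀ U ∈ F, finrank K U = k) ∧ (F : Set (Submodule K V)).Intersecting}

/-- The non-trivial intersecting families of `k`-dimensional subspaces of `V`. Triviality is
encoded by the infimum of the family being nonzero, that is, containing a point. -/
def nontrivialFamilies (K V : Type*) [Field K] [AddCommGroup V] [Module K V] (k : ℕ) :
    Set (Finset (Submodule K V)) :=
  {F ∈ intersectingFamilies K V k | sInf (F : Set (Submodule K V)) = ⊥}

theorem nonempty_of_mem_nontrivialFamilies [Nontrivial V] {k : ℕ} {F : Finset (Submodule K V)}
    (hF : F ∈ nontrivialFamilies K V k) : F.Nonempty := by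
  rw [nonempty_iff_ne_empty]
  rintro rfl
  simpa using hF.2

variable [Finite V]

/-- The `k`-dimensional transversals of a set of subspaces. -/
noncomputable def kTransversals (k : ℕ) (S : Set (Submodule K V)) : Finset (Submodule K V) :=
  {U ∈ transversals S | finrank K U = k}.toFinite.toFinset

@[simp]
theorem mem_kTransversals {k : ℕ} {S : Set (Submodule K V)} {U : Submodule K V} :
    U ∈ kTransversals k S ↔ U ∈ transversals S ∧ finrank K U = k := by
  simp [kTransversals]

theorem kTransversals_congr {k : ℕ} {S T : Set (Submodule K V)}
    (h : transversals S = transversals T) : kTransversals k S = kTransversals k T := by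
  ext
  simp [h]

theorem exists_superset_kTransversals_eq {k : ℕ} (hk : k ≠ 0) {F : Finset (Submodule K V)}
    (hF : F ∈ intersectingFamilies K V k) :
    ∃ F' ∈ intersectingFamilies K V k, F ⊆ F' ∧
      kTransversals k (F' : Set (Submodule K V)) = F' := by
  classical
  obtain ⟨F', hFF', hmax⟩ := (intersectingFamilies K V k).toFinite.exists_le_maximal hF
  obtain ⟨hF'k, hF'⟩ := hmax.prop
  refine ⟨F', hmax.prop, hFF', Subset.antisymm (fun U hU ↦ ?_) fun U hU ↦
    mem_kTransversals.2 ⟨fun W hW ↦ hF' hW hU, hF'k U hU⟩⟩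
  obtain ⟨hUtr, hUk⟩ := mem_kTransversals.1 hU
  have hU_ne_bot : U ≠ ⊥ := by
    rintro rfl
    exact hk (by simpa using hUk.symm)
  have insert_mem : insert U F' ∈ intersectingFamilies K V k := by
    refine ⟨by simpa [hUk] using hF'k, ?_⟩
    rw [coe_insert]
    exact hF'.insert hU_ne_bot fun W hW hUW ↦ hUtr W hW hUW.symm
  exact hmax.le_of_ge insert_mem (subset_insert U F') (mem_insert_self U F')

theorem exists_generators_kTransversals [Nontrivial V] {k : ℕ} (hk : k ≠ 0)
    {F : Finset (Submodule K V)} (hF : F ∈ nontrivialFamilies K V k) :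
    ∃ g : Fin ((finrank K V).choose k) → Submodule K V,
      F ⊆ kTransversals k (Set.range g) ∧
        kTransversals k (Set.range g) ∈ nontrivialFamilies K V k := by
  obtain ⟨F', hF', hFF', hF'max⟩ := exists_superset_kTransversals_eq hk hF.1
  have hF'_mem : F' ∈ nontrivialFamilies K V k := ⟨hF', le_bot_iff.1 (hF.2 ▸ sInf_le_sInf hFF')⟩
  obtain ⟨G, -, hGcard, hGtr⟩ := exists_subset_transversals_eq hF'.1
  have hG : G.Nonempty := by
    obtain ⟨U, hU⟩ := nonempty_of_mem_nontrivialFamilies hF'_mem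
    rw [nonempty_iff_ne_empty]
    rintro rfl
    have hbot : ⊥ ∈ transversals (F' : Set (Submodule K V)) := hGtr ▸ by simp [transversals]
    exact hbot U hU disjoint_bot_right
  obtain ⟨g, hg⟩ := exists_range_eq_of_card_le hG hGcard
  have hgF' : kTransversals k (Set.range g) = F' := by
    rw [hg, kTransversals_congr hGtr, hF'max]
  exact ⟨g, hgF'.symm ▸ hFF', hgF'.symm ▸ hF'_mem⟩

theorem ncard_nontrivialFamilies_le [Nontrivial V] {k : ℕ} (hk : k ≠ 0) {c : ℝ}
    (hc : ∀ F ∈ nontrivialFamilies K V k, (#F : ℝ) ≤ c) :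
    ((nontrivialFamilies K V k).ncard : ℝ) ≤
      (Nat.card (Submodule K V) : ℝ) ^ (finrank K V).choose k * (2 : ℝ) ^ c := by
  have := Fintype.ofFinite (Submodule K V)
  have h := ncard_le_card_mul_two_rpow
    (fun g : Fin ((finrank K V).choose k) → Submodule K V ↦ kTransversals k (Set.range g))
    (fun F hF ↦ (exists_generators_kTransversals hk hF).imp fun g hg ↦ ⟨hg.1, hc _ hg.2⟩)
  simpa [Nat.card_eq_fintype_card] using h

end Containers

section Stars

theorem sum_card_le_card_biUnion_add_sum_card_inter {α ι : Type*} [DecidableEq α] [DecidableEq ι]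
    (s : Finset ι) (A : ι → Finset α) :
    ∑ i ∈ s, #(A i) ≤ #(s.biUnion A) + ∑ i ∈ s, ∑ j ∈ s.erase i, #(A i ∩ A j) := by
  let own i := A i \ (s.erase i).biUnion A
  have own_disjoint : (s : Set ι).PairwiseDisjoint own := by
    intro i _ j hj hij
    refine disjoint_left.2 fun x hxi hxj ↦ ?_
    exact (mem_sdiff.1 hxi).2 <|
      mem_biUnion.2 ⟨j, mem_erase.2 ⟨hij.symm, hj⟩, (mem_sdiff.1 hxj).1⟩
  have card_le_own : ∀ i ∈ s, #(A i) ≤ #(own i) + ∑ j ∈ s.erase i, #(A i ∩ A j) := by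
    intro i _
    calc #(A i) = #(own i) + #(A i ∩ (s.erase i).biUnion A) :=
          (card_sdiff_add_card_inter _ _).symm
      _ ≤ #(own i) + ∑ j ∈ s.erase i, #(A i ∩ A j) := by
          rw [inter_biUnion]
          gcongr
          exact card_biUnion_le
  calc ∑ i ∈ s, #(A i) ≤ ∑ i ∈ s, #(own i) + ∑ i ∈ s, ∑ j ∈ s.erase i, #(A i ∩ A j) :=
        (sum_le_sum card_le_own).trans_eq sum_add_distrib
    _ = #(s.biUnion own) + ∑ i ∈ s, ∑ j ∈ s.erase i, #(A i ∩ A j) := by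
        rw [card_biUnion own_disjoint]
    _ ≤ #(s.biUnion A) + ∑ i ∈ s, ∑ j ∈ s.erase i, #(A i ∩ A j) := by
        gcongr
        exact biUnion_mono fun i _ ↦ sdiff_subset

variable {K V : Type*} [Field K] [AddCommGroup V] [Module K V] [Finite V] {k : ℕ}

theorem intersectingFamilies_diff_nontrivialFamilies [DecidableEq (Finset (Submodule K V))] :
    intersectingFamilies K V k \ nontrivialFamilies K V k =
      ((points (⊤ : Submodule K V)).biUnion fun p ↦ (kStar k p).powerset :
        Finset (Finset (Submodule K V))) := by
  ext F
  simp only [Set.mem_sdiff, coe_biUnion, Set.mem_iUnion, mem_coe, mem_points, le_top, and_true,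
    mem_powerset, exists_prop]
  constructor
  · rintro ⟨hF, hFnontriv⟩
    obtain ⟨p, hp, hpF⟩ := (eq_bot_or_exists_atom_le (sInf (F : Set (Submodule K V)))).resolve_left
      fun h ↦ hFnontriv ⟨hF, h⟩
    exact ⟨p, hp, fun U hU ↦ mem_kStar.2 ⟨hF.1 U hU, hpF.trans (sInf_le hU)⟩⟩
  · rintro ⟨p, hp, hFp⟩
    have p_le : ∀ U ∈ F, p ≤ U := fun U hU ↦ (mem_kStar.1 (hFp hU)).2
    refine ⟨⟨fun U hU ↦ (mem_kStar.1 (hFp hU)).1, fun U hU W hW hUW ↦ ?_⟩, fun hF ↦ ?_⟩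
    · exact hp.1 (le_bot_iff.1 (hUW (p_le U hU) (p_le W hW)))
    · exact hp.1 (le_bot_iff.1 (hF.2 ▸ le_sInf p_le))

theorem powerset_kStar_inter [DecidableEq (Submodule K V)] (L L' : Submodule K V) :
    (kStar k L).powerset ∩ (kStar k L').powerset = (kStar k (L ⊔ L')).powerset := by
  ext F
  simp only [mem_inter, mem_powerset, subset_iff, mem_kStar, sup_le_iff, ← forall_and]
  grind

theorem finrank_sup_of_isAtom_of_ne {p p' : Submodule K V} (hp : IsAtom p) (hp' : IsAtom p')
    (hne : p ≠ p') : finrank K ↥(p ⊔ p') = 2 := by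
  rw [finrank_sup_of_disjoint (hp.disjoint_of_ne hp' hne), isAtom_iff_finrank_eq_one.1 hp,
    isAtom_iff_finrank_eq_one.1 hp']

variable [Fintype K]

theorem card_powerset_kStar (L : Submodule K V) (hL : finrank K L ≤ k) (hk : k ≤ finrank K V) :
    (#(kStar k L).powerset : ℝ) =
      (2 : ℝ) ^ gaussBinom (Fintype.card K) (finrank K V - finrank K L) (k - finrank K L) := by
  rw [card_powerset, ← card_kStar L hL hk, Real.rpow_natCast, Nat.cast_pow, Nat.cast_ofNat]

theorem sum_card_powerset_kStar_points (hk : 1 ≤ k) (hkV : k ≤ finrank K V) :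
    ∑ p ∈ points (⊤ : Submodule K V), (#(kStar k p).powerset : ℝ) =
      gaussBinom (Fintype.card K) (finrank K V) 1 *
        (2 : ℝ) ^ gaussBinom (Fintype.card K) (finrank K V - 1) (k - 1) := by
  rw [← finrank_top K V, ← card_points, finrank_top, ← nsmul_eq_mul]
  refine sum_eq_card_nsmul fun p hp ↦ ?_
  have hp1 : finrank K p = 1 := isAtom_iff_finrank_eq_one.1 (mem_points.1 hp).1
  rw [card_powerset_kStar p (hp1.trans_le hk) hkV, hp1]

theorem sum_card_powerset_kStar_inter_le [DecidableEq (Submodule K V)] (hk : 2 ≤ k)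
    (hkV : k ≤ finrank K V) :
    ∑ p ∈ points (⊤ : Submodule K V), ∑ p' ∈ (points (⊤ : Submodule K V)).erase p,
        (#((kStar k p).powerset ∩ (kStar k p').powerset) : ℝ) ≤
      gaussBinom (Fintype.card K) (finrank K V) 1 * (gaussBinom (Fintype.card K) (finrank K V) 1 *
        (2 : ℝ) ^ gaussBinom (Fintype.card K) (finrank K V - 2) (k - 2)) := by
  rw [← finrank_top K V, ← card_points, finrank_top, ← nsmul_eq_mul, ← nsmul_eq_mul]
  refine sum_le_card_nsmul _ _ _ fun p hp ↦
    (sum_le_card_nsmul _ _ _ fun p' hp' ↦ ?_).trans (nsmul_le_nsmul_left (by positivity)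
      (card_le_card (erase_subset p _)))
  have hpp' : finrank K ↥(p ⊔ p') = 2 := finrank_sup_of_isAtom_of_ne (mem_points.1 hp).1
    (mem_points.1 (mem_of_mem_erase hp')).1 (ne_of_mem_erase hp').symm
  rw [powerset_kStar_inter, card_powerset_kStar _ (hpp'.trans_le hk) hkV, hpp']

theorem ncard_intersectingFamilies_le (hk : 1 ≤ k) (hkV : k ≤ finrank K V) :
    ((intersectingFamilies K V k).ncard : ℝ) ≤
      gaussBinom (Fintype.card K) (finrank K V) 1 *
        (2 : ℝ) ^ gaussBinom (Fintype.card K) (finrank K V - 1) (k - 1) +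
      (nontrivialFamilies K V k).ncard := by
  classical
  have nontrivial_subset : nontrivialFamilies K V k ⊆ intersectingFamilies K V k :=
    Set.sep_subset _ _
  rw [← Set.ncard_sdiff_add_ncard_of_subset nontrivial_subset,
    intersectingFamilies_diff_nontrivialFamilies, Set.ncard_coe_finset, Nat.cast_add,
    ← sum_card_powerset_kStar_points hk hkV]
  gcongr
  exact_mod_cast card_biUnion_le

theorem le_ncard_intersectingFamilies (hk : 2 ≤ k) (hkV : k ≤ finrank K V) :
    gaussBinom (Fintype.card K) (finrank K V) 1 *
        (2 : ℝ) ^ gaussBinom (Fintype.card K) (finrank K V - 1) (k - 1) ≤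
      (intersectingFamilies K V k).ncard + gaussBinom (Fintype.card K) (finrank K V) 1 *
        (gaussBinom (Fintype.card K) (finrank K V) 1 *
          (2 : ℝ) ^ gaussBinom (Fintype.card K) (finrank K V - 2) (k - 2)) := by
  classical
  rw [← sum_card_powerset_kStar_points (one_le_two.trans hk) hkV]
  refine le_trans ?_ (add_le_add_right (sum_card_powerset_kStar_inter_le hk hkV) _)
  have trivial_le : #((points (⊤ : Submodule K V)).biUnion fun p ↦ (kStar k p).powerset) ≤
      (intersectingFamilies K V k).ncard := by
    rw [← Set.ncard_coe_finset, ← intersectingFamilies_diff_nontrivialFamilies]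
    exact Set.ncard_le_ncard Set.sdiff_subset
  exact_mod_cast (sum_card_le_card_biUnion_add_sum_card_inter _ _).trans
    (Nat.add_le_add_right trivial_le _)

end Stars

section CoordinateSpace

variable {K : Type*} [Field K] {n : ℕ} {F : Finset (Submodule K (Fin n → K))}

theorem isIntersectingFam_iff_intersecting :
    IsIntersectingFam F ↔ (F : Set (Submodule K (Fin n → K))).Intersecting := by
  simp only [IsIntersectingFam, Set.Intersecting, mem_coe, one_le_finrank_iff, disjoint_iff,
    ne_eq]

theorem isTrivialFam_iff_sInf_ne_bot :
    IsTrivialFam F ↔ sInf (F : Set (Submodule K (Fin n → K))) ≠ ⊥ := by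
  simp_rw [IsTrivialFam, ← isAtom_iff_finrank_eq_one]
  refine ⟨fun ⟨L, hL, hLF⟩ h ↦ hL.1 (le_bot_iff.1 (h ▸ le_sInf hLF)), fun h ↦ ?_⟩
  obtain ⟨L, hL, hLF⟩ := (eq_bot_or_exists_atom_le _).resolve_left h
  exact ⟨L, hL, fun U hU ↦ hLF.trans (sInf_le hU)⟩

theorem natCard_isIntersectingFam (k : ℕ) :
    Nat.card {𝓕 : Finset (Submodule K (Fin n → K)) //
      (∀ U ∈ 𝓕, finrank K ↥U = k) ∧ IsIntersectingFam 𝓕} =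
      (intersectingFamilies K (Fin n → K) k).ncard := by
  simp_rw [isIntersectingFam_iff_intersecting]
  rfl

theorem natCard_isIntersectingFam_not_isTrivialFam (k : ℕ) :
    Nat.card {𝓕 : Finset (Submodule K (Fin n → K)) //
      (∀ U ∈ 𝓕, finrank K ↥U = k) ∧ IsIntersectingFam 𝓕 ∧ ¬ IsTrivialFam 𝓕} =
      (nontrivialFamilies K (Fin n → K) k).ncard := by
  simp_rw [isIntersectingFam_iff_intersecting, isTrivialFam_iff_sInf_ne_bot, not_not, ← and_assoc]
  rfl

end CoordinateSpace

section Asymptotics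

open Filter

theorem eventually_mul_two_mul_add_one_pow_le (C d : ℕ) :
    ∀ᶠ j : ℕ in atTop, C * (2 * j + 1) ^ d ≤ 2 ^ j := by
  have ratio_lt : ∀ᶠ j : ℕ in atTop, (j : ℝ) ^ d / 2 ^ j < 1 / (C * 3 ^ d + 1) :=
    (tendsto_pow_const_div_const_pow_of_one_lt d one_lt_two).eventually_lt_const (by positivity)
  filter_upwards [ratio_lt, eventually_ge_atTop 1] with j hj hj1
  rw [div_lt_div_iff₀ (by positivity) (by positivity), one_mul] at hj
  calc C * (2 * j + 1) ^ d ≤ C * (3 * j) ^ d := by gcongr; omega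
    _ ≤ j ^ d * (C * 3 ^ d + 1) := by rw [mul_pow]; nlinarith [Nat.zero_le (j ^ d)]
    _ ≤ 2 ^ j := by exact_mod_cast hj.le

theorem eventually_mul_mul_pow_le_pow_sub (C d : ℕ) :
    ∀ᶠ n : ℕ in atTop, ∀ q k : ℕ, 2 ≤ q → 2 * k + 1 ≤ n → C * q * n ^ d ≤ q ^ (n - k) := by
  obtain ⟨j₀, hj₀⟩ := eventually_atTop.1 (eventually_mul_two_mul_add_one_pow_le C d)
  filter_upwards [eventually_ge_atTop (2 * j₀ + 1)] with n hn q k hq hkn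
  calc C * q * n ^ d = C * n ^ d * q := mul_right_comm _ _ _
    _ ≤ C * (2 * (n - k - 1) + 1) ^ d * q := by gcongr; omega
    _ ≤ 2 ^ (n - k - 1) * q := by gcongr; exact hj₀ _ (by omega)
    _ ≤ q ^ (n - k - 1) * q := by gcongr
    _ = q ^ (n - k) := by rw [← pow_succ, Nat.sub_add_cancel (by omega)]

theorem eventually_mul_choose_add_le_pow (c : ℕ) :
    ∀ᶠ n : ℕ in atTop, ∀ q k : ℕ, 2 ≤ q → 2 ≤ k → 2 * k + 1 ≤ n →
      4 * (q * (n * n * n.choose k) + c) ≤ q ^ ((k - 1) * (n - k)) := by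
  filter_upwards [eventually_mul_mul_pow_le_pow_sub (4 * (c + 1)) 4] with n hn q k hq hk hkn
  obtain ⟨a, rfl⟩ : ∃ a, k = a + 1 := ⟨k - 1, by omega⟩
  have base_pos : 0 < q * n ^ (a + 3) := Nat.mul_pos (by omega) (Nat.pow_pos (by omega))
  calc 4 * (q * (n * n * n.choose (a + 1)) + c)
      ≤ 4 * (q * (n * n * n ^ (a + 1)) + c * (q * n ^ (a + 3))) := by
        gcongr
        · exact Nat.choose_le_pow _ _
        · exact Nat.le_mul_of_pos_right c base_pos
    _ = 4 * (c + 1) * q * n ^ (a + 3) := by ring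
    _ ≤ (4 * (c + 1) * q) ^ a * n ^ (4 * a) := by
        gcongr
        · exact Nat.le_self_pow (by omega) _
        · omega
        · omega
    _ = (4 * (c + 1) * q * n ^ 4) ^ a := by rw [pow_mul, ← mul_pow]
    _ ≤ (q ^ (n - (a + 1))) ^ a := by gcongr; exact hn q (a + 1) hq hkn
    _ = q ^ ((a + 1 - 1) * (n - (a + 1))) := by rw [← pow_mul, mul_comm, Nat.add_sub_cancel]

theorem eventually_pow_mul_two_rpow_le {ε : ℝ} (hε : 0 < ε) :
    ∀ᶠ n : ℕ in atTop, ∀ q k : ℕ, 2 ≤ q → 2 ≤ k → 2 * k + 1 ≤ n →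
      ∀ M : ℝ, (q : ℝ) ^ ((k - 1) * (n - k)) ≤ M →
        (q : ℝ) ^ (n * n * n.choose k) * (2 : ℝ) ^ (3 / 4 * M) ≤ ε * (2 : ℝ) ^ M := by
  obtain ⟨c, hc⟩ := pow_unbounded_of_one_lt (1 / ε) (one_lt_two (α := ℝ))
  rw [div_lt_iff₀' hε] at hc
  filter_upwards [eventually_mul_choose_add_le_pow c] with n hn q k hq hk hkn M hM
  set m := n * n * n.choose k
  have exponent_le : ((q * m + c : ℕ) : ℝ) ≤ 1 / 4 * M := by
    have : ((4 * (q * m + c) : ℕ) : ℝ) ≤ M := le_trans (mod_cast hn q k hq hk hkn) hM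
    push_cast at this ⊢
    linarith
  have pow_le : (q : ℝ) ^ m ≤ ε * (2 : ℝ) ^ (1 / 4 * M) := by
    calc (q : ℝ) ^ m ≤ (2 ^ q) ^ m := by gcongr; exact_mod_cast Nat.lt_two_pow_self.le
      _ ≤ (ε * 2 ^ c) * (2 ^ q) ^ m := le_mul_of_one_le_left (by positivity) hc.le
      _ = ε * (2 : ℝ) ^ ((q * m + c : ℕ) : ℝ) := by
          rw [Real.rpow_natCast, pow_add, ← pow_mul]
          ring
      _ ≤ ε * (2 : ℝ) ^ (1 / 4 * M) := by gcongr; exact one_le_two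
  calc (q : ℝ) ^ m * (2 : ℝ) ^ (3 / 4 * M)
      ≤ ε * (2 : ℝ) ^ (1 / 4 * M) * (2 : ℝ) ^ (3 / 4 * M) := by gcongr
    _ = ε * (2 : ℝ) ^ M := by
        rw [mul_assoc, ← Real.rpow_add two_pos, ← add_mul]
        norm_num

end Asymptotics

section Bounds

theorem exists_two_mul_add_le_and_add_one_le {q k n : ℕ}
    (h : (q = 2 ∧ 2 * k + 2 ≤ n) ∨ (3 ≤ q ∧ 2 * k + 1 ≤ n)) :
    ∃ e, 2 * k + e ≤ n ∧ (q : ℝ) + 1 ≤ 3 / 4 * ((q : ℝ) ^ e * (q - 1)) := by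
  rcases h with ⟨rfl, hn⟩ | ⟨hq, hn⟩
  · exact ⟨2, hn, by norm_num⟩
  · have : (3 : ℝ) ≤ q := mod_cast hq
    exact ⟨1, hn, by nlinarith⟩

theorem eventually_pow_mul_two_rpow_gaussBinom_le {ε : ℝ} (hε : 0 < ε) :
    ∀ᶠ n : ℕ in Filter.atTop, ∀ q k : ℕ, 2 ≤ q → 2 ≤ k → 2 * k + 1 ≤ n →
      (q : ℝ) ^ (n * n * n.choose k) * (2 : ℝ) ^ (3 / 4 * gaussBinom q (n - 1) (k - 1)) ≤
        ε * (2 : ℝ) ^ gaussBinom q (n - 1) (k - 1) := by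
  filter_upwards [eventually_pow_mul_two_rpow_le hε] with n hn q k hq hk hkn
  refine hn q k hq hk hkn _ ?_
  simpa only [show n - 1 - (k - 1) = n - k by omega] using
    pow_mul_sub_le_gaussBinom hq (by omega : k - 1 ≤ n - 1)

theorem gaussBinom_one_right_mul_two_rpow_le {q n k e : ℕ} (hq : 2 ≤ q) (hk : 2 ≤ k) {c : ℝ}
    (hn : 2 * k + e ≤ n) (hc : (q : ℝ) + 1 ≤ c * (q ^ e * (q - 1))) (hc1 : c ≤ 1) :
    gaussBinom q n 1 * (2 : ℝ) ^ gaussBinom q (n - 2) (k - 2) ≤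
      (q : ℝ) ^ (n * n * n.choose k) * (2 : ℝ) ^ (c * gaussBinom q (n - 1) (k - 1)) := by
  have hq1 : (1 : ℝ) ≤ q := mod_cast one_le_two.trans hq
  have exponent_le : n ≤ n * n * n.choose k := by
    have := Nat.choose_pos (by omega : k ≤ n)
    nlinarith
  have gaussBinom_le : gaussBinom q (n - 2) (k - 2) ≤ c * gaussBinom q (n - 1) (k - 1) := by
    have := gaussBinom_le_mul_succ_succ hq (by omega : e + 1 + (k - 2) ≤ n - 2) hc hc1
    rwa [show n - 2 + 1 = n - 1 by omega, show k - 2 + 1 = k - 1 by omega] at this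
  gcongr
  · exact (gaussBinom_one_right_le_pow hq n).trans (pow_le_pow_right₀ hq1 exponent_le)
  · exact one_le_two

theorem ncard_nontrivialFamilies_le_pow_mul_two_rpow {K V : Type*} [Field K] [AddCommGroup V]
    [Module K V] [Finite V] [Fintype K] {k e : ℕ} (hk : k ≠ 0) {c : ℝ}
    (hn : 2 * k + e ≤ finrank K V)
    (hc : (Fintype.card K : ℝ) + 1 ≤ c * ((Fintype.card K : ℝ) ^ e * (Fintype.card K - 1)))
    (hc1 : c ≤ 1) :
    ((nontrivialFamilies K V k).ncard : ℝ) ≤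
      (Fintype.card K : ℝ) ^ (finrank K V * finrank K V * (finrank K V).choose k) *
        (2 : ℝ) ^ (c * gaussBinom (Fintype.card K) (finrank K V - 1) (k - 1)) := by
  have : Nontrivial V := nontrivial_of_finrank_pos (R := K) (by omega)
  refine (ncard_nontrivialFamilies_le hk fun F hF ↦ card_le_mul_gaussBinom_of_sInf_eq_bot hF.1.2
    hF.1.1 (nonempty_of_mem_nontrivialFamilies hF) hF.2 hn hc hc1).trans ?_
  rw [pow_mul]
  gcongr
  exact_mod_cast natCard_submodule_le

end Bounds

theorem typical_structure_of_intersecting_families_of_subspaces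
    (ε : ℝ) (hε : 0 < ε) :
    ∃ n₀ : ℕ, ∀ n : ℕ, n₀ ≤ n → ∀ q k : ℕ, IsPrimePow q → 2 ≤ k →
      ((q = 2 ∧ 2 * k + 2 ≤ n) ∨ (3 ≤ q ∧ 2 * k + 1 ≤ n)) →
      ∀ (K : Type) [Field K] [Fintype K], Fintype.card K = q →
      ((Nat.card {𝓕 : Finset (Submodule K (Fin n → K)) //
          (∀ U ∈ 𝓕, Module.finrank K ↥U = k) ∧ IsIntersectingFam 𝓕 ∧
            ¬ IsTrivialFam 𝓕} : ℝ) ≤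
        ε * gaussBinom q n 1 * (2 : ℝ) ^ gaussBinom q (n - 1) (k - 1) ∧
      (1 - ε) * gaussBinom q n 1 * (2 : ℝ) ^ gaussBinom q (n - 1) (k - 1) ≤
        (Nat.card {𝓕 : Finset (Submodule K (Fin n → K)) //
          (∀ U ∈ 𝓕, Module.finrank K ↥U = k) ∧ IsIntersectingFam 𝓕} : ℝ) ∧
      (Nat.card {𝓕 : Finset (Submodule K (Fin n → K)) //
          (∀ U ∈ 𝓕, Module.finrank K ↥U = k) ∧ IsIntersectingFam 𝓕} : ℝ) ≤
        (1 + ε) * gaussBinom q n 1 * (2 : ℝ) ^ gaussBinom q (n - 1) (k - 1)) := by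
  obtain ⟨n₀, hn₀⟩ := Filter.eventually_atTop.1 (eventually_pow_mul_two_rpow_gaussBinom_le hε)
  refine ⟨n₀, fun n hn q k _ hk hqn K _ _ hKq ↦ ?_⟩
  subst hKq
  have hV : finrank K (Fin n → K) = n := finrank_fin_fun K
  have hq : 2 ≤ Fintype.card K := Fintype.one_lt_card
  obtain ⟨e, hne, he⟩ := exists_two_mul_add_le_and_add_one_le hqn
  have nontrivial_le := ncard_nontrivialFamilies_le_pow_mul_two_rpow (V := Fin n → K)
    (by omega : k ≠ 0) (hne.trans_eq hV.symm) he (by norm_num)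
  have total_le := ncard_intersectingFamilies_le (K := K) (V := Fin n → K) (k := k)
    (by omega) (by omega)
  have total_ge := le_ncard_intersectingFamilies (K := K) (V := Fin n → K) hk (by omega)
  rw [hV] at nontrivial_le total_le total_ge
  have overlap_le := gaussBinom_one_right_mul_two_rpow_le hq hk hne he (by norm_num)
  have error_le := hn₀ n hn _ k hq hk (by omega)
  have one_le_points : 1 ≤ gaussBinom (Fintype.card K) n 1 := one_le_gaussBinom hq (by omega)
  set P := gaussBinom (Fintype.card K) n 1
  set X := (2 : ℝ) ^ gaussBinom (Fintype.card K) (n - 1) (k - 1)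
  have overlaps_le := mul_le_mul_of_nonneg_left (overlap_le.trans error_le)
    (zero_le_one.trans one_le_points)
  have error_le_mul : ε * X ≤ ε * P * X :=
    mul_le_mul_of_nonneg_right (le_mul_of_one_le_right hε.le one_le_points) (by positivity)
  rw [natCard_isIntersectingFam_not_isTrivialFam, natCard_isIntersectingFam]
  exact ⟨by linarith, by linarith, by linarith⟩
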